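/- The ℂ-linear span V_Ξ of the ten functions Ξ₆[δ₁], …, Ξ₆[δ₁₀] equals the ℂ-linear span of the five functions τ ↦ (∂I₄/∂xᵢ)(P₀(τ),…,P₄(τ)) for i = 0,…,4, and this common span has dimension exactly 5. -/

import Mathlib

open scoped BigOperators

namespace TwoLoop

/-- 2×2 complex matrices. -/
abbrev Mat2 := Matrix (Fin 2) (Fin 2) ℂ

/-- The genus-2 Siegel upper half space: symmetric 2×2 complex matrices with
positive definite imaginary part. -/
def SiegelH2 : Set Mat2 := {τ | τ.transpose = τ ∧ (τ.map Complex.im).PosDef}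

/-- A (half-integer) theta characteristic `[a;b]`, recorded by its rows `a, b ∈ {0,1}²`. -/
abbrev Char := (Fin 2 → ℤ) × (Fin 2 → ℤ)

/-- The theta constant `θ[a;b](τ) = Σ_{n ∈ ℤ²} exp(πi (n+a/2)ᵀ τ (n+a/2) + πi (n+a/2)·b)`. -/
noncomputable def theta (κ : Char) (τ : Mat2) : ℂ :=
  ∑' n : Fin 2 → ℤ,
    Complex.exp ((Real.pi : ℂ) * Complex.I *
      ((∑ i, ∑ j, ((n i : ℂ) + (κ.1 i : ℂ) / 2) * τ i j * ((n j : ℂ) + (κ.1 j : ℂ) / 2))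
        + ∑ i, ((n i : ℂ) + (κ.1 i : ℂ) / 2) * (κ.2 i : ℂ)))

/-- The ten even characteristics δ₁,…,δ₁₀. -/
def δev : Fin 10 → Char :=
  ![(![0,0], ![0,0]), (![0,0], ![0,1]), (![0,0], ![1,0]), (![0,0], ![1,1]),
    (![0,1], ![0,0]), (![0,1], ![1,0]), (![1,0], ![0,0]), (![1,0], ![0,1]),
    (![1,1], ![0,0]), (![1,1], ![1,1])]

/-- The six odd characteristics ν₁,…,ν₆. -/
def νodd : Fin 6 → Char :=
  ![(![0,1], ![0,1]), (![1,0], ![1,0]), (![0,1], ![1,1]),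
    (![1,0], ![1,1]), (![1,1], ![0,1]), (![1,1], ![1,0])]

/-- `Θ[ε](τ) = θ[ε;0](2τ)`. -/
noncomputable def Θf (ε : Fin 2 → ℤ) (τ : Mat2) : ℂ := theta (ε, ![0,0]) ((2 : ℂ) • τ)

noncomputable def P0 (τ : Mat2) : ℂ :=
  Θf ![0,0] τ ^ 4 + Θf ![0,1] τ ^ 4 + Θf ![1,0] τ ^ 4 + Θf ![1,1] τ ^ 4
noncomputable def P1 (τ : Mat2) : ℂ :=
  2 * (Θf ![0,0] τ ^ 2 * Θf ![0,1] τ ^ 2 + Θf ![1,0] τ ^ 2 * Θf ![1,1] τ ^ 2)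
noncomputable def P2 (τ : Mat2) : ℂ :=
  2 * (Θf ![0,0] τ ^ 2 * Θf ![1,0] τ ^ 2 + Θf ![0,1] τ ^ 2 * Θf ![1,1] τ ^ 2)
noncomputable def P3 (τ : Mat2) : ℂ :=
  2 * (Θf ![0,0] τ ^ 2 * Θf ![1,1] τ ^ 2 + Θf ![0,1] τ ^ 2 * Θf ![1,0] τ ^ 2)
noncomputable def P4 (τ : Mat2) : ℂ :=
  4 * (Θf ![0,0] τ * Θf ![0,1] τ * Θf ![1,0] τ * Θf ![1,1] τ)

/-- The vector `(P₀,…,P₄)`. -/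
noncomputable def Pv : Fin 5 → Mat2 → ℂ := ![P0, P1, P2, P3, P4]

open MvPolynomial in
/-- The Igusa quartic as a polynomial in `x₀,…,x₄`. -/
noncomputable def I4poly : MvPolynomial (Fin 5) ℂ :=
  X 4 ^ 4 + X 4 ^ 2 * X 0 ^ 2 - X 4 ^ 2 * X 1 ^ 2 - X 4 ^ 2 * X 2 ^ 2 - X 4 ^ 2 * X 3 ^ 2
    + X 1 ^ 2 * X 2 ^ 2 + X 1 ^ 2 * X 3 ^ 2 + X 2 ^ 2 * X 3 ^ 2
    - 2 * (X 0 * X 1 * X 2 * X 3)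

/-- The signature `⟨κ|λ⟩ = exp(πi(a_κ·b_λ − b_κ·a_λ))`. -/
noncomputable def sig (κ lam : Char) : ℂ :=
  Complex.exp ((Real.pi : ℂ) * Complex.I *
    (((∑ i, κ.1 i * lam.2 i : ℤ) : ℂ) - ((∑ i, κ.2 i * lam.1 i : ℤ) : ℂ)))

/-- Componentwise mod-2 sum of characteristics. -/
def addChar (κ lam : Char) : Char :=
  (fun i => (κ.1 i + lam.1 i) % 2, fun i => (κ.2 i + lam.2 i) % 2)

/-- For each even characteristic `δ_d`, the ordering `(k₁,…,k₆)` of `{1,…,6}` (0-indexed) whose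
first three entries form the triad of odd characteristics with `δ_d = ν_{k₁}+ν_{k₂}+ν_{k₃}`
and whose last three are the complementary indices. -/
def triad : Fin 10 → Fin 6 → Fin 6 :=
  ![![0,3,5,1,2,4], ![0,1,5,2,3,4], ![0,1,4,2,3,5], ![0,3,4,1,2,5], ![0,1,3,2,4,5],
    ![0,4,5,1,2,3], ![0,1,2,3,4,5], ![0,2,3,1,4,5], ![0,2,5,1,3,4], ![0,2,4,1,3,5]]

/-- D'Hoker–Phong's `Ξ₆[δ]`. -/
noncomputable def Xi6 (d : Fin 10) (τ : Mat2) : ℂ :=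
  ∑ i : Fin 3, ∑ j : Fin 3,
    if i < j then
      sig (νodd (triad d (Fin.castLE (by norm_num) i))) (νodd (triad d (Fin.castLE (by norm_num) j))) *
        ∏ m : Fin 3,
          theta (addChar (addChar (νodd (triad d (Fin.castLE (by norm_num) i)))
              (νodd (triad d (Fin.castLE (by norm_num) j))))
            (νodd (triad d (⟨m.1 + 3, by omega⟩ : Fin 6)))) τ ^ 4
    else 0

/-- The formal derivative `∂I₄/∂θ⁴[δ]` of the Igusa quartic with respect to the ten fourth
powers of the even theta constants, regarded as independent variables. -/
noncomputable def Dd (d : Fin 10) (τ : Mat2) : ℂ :=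
  (1 / 48 : ℂ) *
    (theta (δev d) τ ^ 4 * (∑ d' : Fin 10, theta (δev d') τ ^ 8) - 4 * theta (δev d) τ ^ 12)

/-- `f_δ = 2Ξ₆[δ] − ∂I₄/∂θ⁴[δ]`. -/
noncomputable def fδ (d : Fin 10) (τ : Mat2) : ℂ := 2 * Xi6 d τ - Dd d τ

/-- `Ψ₆`, the weight-6 modular form. -/
noncomputable def Ψ6 (τ : Mat2) : ℂ :=
  P0 τ ^ 3 - 9 * P0 τ * (P1 τ ^ 2 + P2 τ ^ 2 + P3 τ ^ 2 - 4 * P4 τ ^ 2)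
    + 54 * (P1 τ * P2 τ * P3 τ)

/-- `Ψ₁₀`, the weight-10 modular form. -/
noncomputable def Ψ10 (τ : Mat2) : ℂ := ∏ d : Fin 10, theta (δev d) τ ^ 2

/-- A characteristic is even when `a·b` is even. -/
def IsEvenChar (κ : Char) : Prop := (∑ i, κ.1 i * κ.2 i) % 2 = 0

/-- A characteristic is odd when `a·b` is odd. -/
def IsOddChar (κ : Char) : Prop := (∑ i, κ.1 i * κ.2 i) % 2 = 1

/-- The formal partial derivative `∂I₄/∂xᵢ` evaluated at `(P₀(τ),…,P₄(τ))`. -/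
noncomputable def dI4 (i : Fin 5) (τ : Mat2) : ℂ :=
  MvPolynomial.eval (fun k => Pv k τ) (MvPolynomial.pderiv i I4poly)

/-!
Pairing the lattice points `m, n` by the class of `m + n` modulo 2 turns `θ[a;b]²` into a signed
sum of products of two `Θ[ε]`, so the fourth powers of the even theta constants are linear forms in
`P₀, …, P₄`. Substituting these forms, each `Ξ₆[δ]` becomes an integral combination of the five
derivatives of the Igusa quartic, and the `10 × 5` coefficient matrix has a left inverse, whence
the equality of spans.

The five derivatives are eigenvectors of the translations `τ ↦ τ + S` for distinct sign characters,
so they are independent once none vanishes identically. At `τ = iyA`, with `A` the hexagonal Gram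
matrix, the symmetry of order three makes the three `Θ[ε]`, `ε ≠ 0`, equal to a common `t`, which
tends to `0` as `y → ∞` while `s = Θ[0] ≥ 1`; there the derivatives are nonzero multiples of
`(s² - t²)³`.
-/

open Matrix Filter Topology

open scoped MatrixOrder in
theorem exists_pos_mul_dotProduct_self_le {n : Type*} [Fintype n]
    {Y : Matrix n n ℝ} (hY : Y.PosDef) :
    ∃ c > 0, ∀ v : n → ℝ, c * (v ⬝ᵥ v) ≤ v ⬝ᵥ Y *ᵥ v := by
  classical
  obtain _ | _ := isEmpty_or_nonempty n
  · exact ⟨1, one_pos, by simp [dotProduct]⟩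
  obtain ⟨c, hc, hcY⟩ := (CFC.exists_pos_algebraMap_le_iff hY.isHermitian).2 fun x hx => by
    rw [hY.isHermitian.spectrum_real_eq_range_eigenvalues] at hx
    obtain ⟨i, rfl⟩ := hx
    exact hY.eigenvalues_pos i
  refine ⟨c, hc, fun v => ?_⟩
  have hv := (Matrix.le_iff.1 hcY).dotProduct_mulVec_nonneg v
  simpa [Algebra.algebraMap_eq_smul_one, sub_mulVec, smul_mulVec] using hv

/-- The point `n + a / 2` of the shifted lattice underlying the theta series of characteristic
`[a;b]`. -/
noncomputable def halfShift (a n : Fin 2 → ℤ) : Fin 2 → ℝ := fun i => n i + a i / 2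

/-- The term of index `n` of the real theta series `∑ n, exp (-π (n + a/2)ᵀ Y (n + a/2))`. -/
noncomputable def gaussTerm (Y : Matrix (Fin 2) (Fin 2) ℝ) (a n : Fin 2 → ℤ) : ℝ :=
  Real.exp (-Real.pi * (halfShift a n ⬝ᵥ Y *ᵥ halfShift a n))

theorem gaussTerm_pos (Y : Matrix (Fin 2) (Fin 2) ℝ) (a n : Fin 2 → ℤ) : 0 < gaussTerm Y a n :=
  Real.exp_pos _

theorem summable_exp_neg_mul_add_sq {c : ℝ} (hc : 0 < c) (x : ℝ) :
    Summable fun n : ℤ => Real.exp (-Real.pi * (c * (n + x) ^ 2)) := by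
  have hterm := (summable_jacobiTheta₂_term_iff (Complex.I * (c * x : ℝ)) (Complex.I * c)).2
    (by simpa using hc)
  refine (hterm.norm.mul_right (Real.exp (-Real.pi * (c * x ^ 2)))).congr fun n => ?_
  rw [norm_jacobiTheta₂_term, ← Real.exp_add]
  simp only [Complex.I_mul_im, Complex.ofReal_re]
  ring_nf

theorem summable_gaussTerm {Y : Matrix (Fin 2) (Fin 2) ℝ} (hY : Y.PosDef) (a : Fin 2 → ℤ) :
    Summable (gaussTerm Y a) := by
  obtain ⟨c, hc, hcY⟩ := exists_pos_mul_dotProduct_self_le hY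
  have hprod := (finTwoArrowEquiv ℤ).summable_iff.2 <|
    (summable_exp_neg_mul_add_sq hc (a 0 / 2)).mul_of_nonneg
      (summable_exp_neg_mul_add_sq hc (a 1 / 2))
      (fun _ => (Real.exp_pos _).le) (fun _ => (Real.exp_pos _).le)
  refine hprod.of_nonneg_of_le (fun n => (gaussTerm_pos Y a n).le) fun n => ?_
  calc gaussTerm Y a n
      ≤ Real.exp (-Real.pi * (c * (halfShift a n ⬝ᵥ halfShift a n))) :=
        Real.exp_le_exp.2 (mul_le_mul_of_nonpos_left (hcY _) (neg_nonpos.2 Real.pi_pos.le))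
    _ = Real.exp (-Real.pi * (c * (n 0 + a 0 / 2) ^ 2)) *
          Real.exp (-Real.pi * (c * (n 1 + a 1 / 2) ^ 2)) := by
      rw [← Real.exp_add, ← mul_add, ← mul_add]
      simp only [halfShift, dotProduct, Fin.sum_univ_two, sq]

/-- The term of index `n` of the series defining `theta κ τ`. -/
noncomputable def thetaTerm (κ : Char) (τ : Mat2) (n : Fin 2 → ℤ) : ℂ :=
  Complex.exp ((Real.pi : ℂ) * Complex.I *
    ((∑ i, ∑ j, ((n i : ℂ) + (κ.1 i : ℂ) / 2) * τ i j * ((n j : ℂ) + (κ.1 j : ℂ) / 2))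
      + ∑ i, ((n i : ℂ) + (κ.1 i : ℂ) / 2) * (κ.2 i : ℂ)))

theorem theta_eq_tsum (κ : Char) (τ : Mat2) : theta κ τ = ∑' n, thetaTerm κ τ n := rfl

theorem norm_thetaTerm (κ : Char) (τ : Mat2) (n : Fin 2 → ℤ) :
    ‖thetaTerm κ τ n‖ = gaussTerm (τ.map Complex.im) κ.1 n := by
  have hshift (i : Fin 2) : (n i : ℂ) + (κ.1 i : ℂ) / 2 = (halfShift κ.1 n i : ℝ) := by
    simp [halfShift]
  have hb (i : Fin 2) : (κ.2 i : ℂ) = ((κ.2 i : ℝ) : ℂ) := by simp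
  rw [thetaTerm, Complex.norm_exp, gaussTerm]
  simp only [hshift, hb, dotProduct, mulVec, Fin.sum_univ_two, map_apply, mul_assoc,
    Complex.re_ofReal_mul, Complex.I_mul_re, Complex.add_im, Complex.im_ofReal_mul,
    Complex.im_mul_ofReal, Complex.ofReal_im]
  ring_nf

theorem summable_norm_thetaTerm {τ : Mat2} (hτ : τ ∈ SiegelH2) (κ : Char) :
    Summable fun n => ‖thetaTerm κ τ n‖ := by
  simpa only [norm_thetaTerm] using summable_gaussTerm hτ.2 κ.1

theorem smul_mem_SiegelH2 {τ : Mat2} (hτ : τ ∈ SiegelH2) {r : ℝ} (hr : 0 < r) :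
    (r : ℂ) • τ ∈ SiegelH2 := by
  refine ⟨by rw [transpose_smul, hτ.1], ?_⟩
  have him : ((r : ℂ) • τ).map Complex.im = r • τ.map Complex.im := by ext; simp
  rw [him]
  exact hτ.2.smul hr

theorem add_mem_SiegelH2 {τ S : Mat2} (hτ : τ ∈ SiegelH2) (hS : S.IsSymm)
    (hSim : S.map Complex.im = 0) : τ + S ∈ SiegelH2 := by
  refine ⟨by rw [transpose_add, hτ.1, hS], ?_⟩
  rw [Matrix.map_add _ Complex.add_im, hSim, add_zero]
  exact hτ.2

theorem I_smul_mem_SiegelH2 {Y : Matrix (Fin 2) (Fin 2) ℝ} (hY : Y.PosDef) :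
    Complex.I • Y.map Complex.ofReal ∈ SiegelH2 := by
  have hsymm : Yᵀ = Y := by rw [← conjTranspose_eq_transpose_of_trivial, hY.isHermitian]
  refine ⟨by rw [transpose_smul, ← transpose_map, hsymm], ?_⟩
  have him : (Complex.I • Y.map Complex.ofReal).map Complex.im = Y := by ext; simp
  rwa [him]

theorem theta_add_two_nsmul (a b k : Fin 2 → ℤ) (τ : Mat2) :
    theta (a + 2 • k, b) τ = theta (a, b) τ := by
  rw [theta_eq_tsum, theta_eq_tsum, ← (Equiv.addRight k).tsum_eq (thetaTerm (a, b) τ)]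
  refine tsum_congr fun n => ?_
  have hshift (i : Fin 2) :
      (n i : ℂ) + ((a + 2 • k) i : ℤ) / 2 = ((n + k) i : ℤ) + (a i : ℂ) / 2 := by
    have hk : (2 • k) i = 2 * k i := by simp
    rw [Pi.add_apply, Pi.add_apply, hk]
    push_cast
    ring
  simp only [thetaTerm, hshift, Equiv.coe_addRight]

theorem theta_mulVec (U : Matrix (Fin 2) (Fin 2) ℤ) [Invertible U] (a b : Fin 2 → ℤ) (τ : Mat2) :
    theta (U *ᵥ a, b) τ =
      theta (a, Uᵀ *ᵥ b) ((U.map Int.cast)ᵀ * τ * U.map Int.cast) := by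
  rw [theta_eq_tsum, theta_eq_tsum,
    ← (U.toLinearEquiv' ‹_›).toEquiv.tsum_eq (thetaTerm (U *ᵥ a, b) τ)]
  refine tsum_congr fun n => ?_
  change thetaTerm (U *ᵥ a, b) τ (U *ᵥ n) = _
  simp only [thetaTerm, mulVec, dotProduct, mul_apply, Fin.sum_univ_two, map_apply,
    transpose_apply]
  push_cast
  ring_nf

theorem exp_pi_mul_I_mul_intCast (k : ℤ) :
    Complex.exp (Real.pi * Complex.I * k) = (k.negOnePow : ℤ) := by
  rw [Int.cast_negOnePow, mul_comm, Complex.exp_int_mul, Complex.exp_pi_mul_I]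

theorem thetaTerm_mul_thetaTerm (a b e p q : Fin 2 → ℤ) (τ : Mat2) :
    thetaTerm (a, b) τ (p + q + e) * thetaTerm (a, b) τ (p - q) =
      (((a + e) ⬝ᵥ b).negOnePow : ℤ) *
        (thetaTerm (a + e, ![0, 0]) ((2 : ℂ) • τ) p * thetaTerm (e, ![0, 0]) ((2 : ℂ) • τ) q) := by
  have hsign : ((a + e) ⬝ᵥ b).negOnePow = ((a + e + 2 • p) ⬝ᵥ b).negOnePow := by
    rw [add_dotProduct _ (2 • p), Int.negOnePow_add, smul_dotProduct, nsmul_eq_mul,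
      Nat.cast_ofNat, Int.negOnePow_two_mul, mul_one]
  rw [hsign, ← exp_pi_mul_I_mul_intCast]
  simp only [thetaTerm, ← Complex.exp_add]
  -- The parallelogram law for the quadratic form attached to `τ`.
  congr 1
  simp only [Pi.add_apply, Pi.sub_apply, Pi.mul_apply, Pi.ofNat_apply, nsmul_eq_mul,
    Nat.cast_ofNat, Int.cast_add, Int.cast_sub, Int.cast_mul, Int.cast_ofNat, Int.cast_zero,
    dotProduct, Fin.sum_univ_two, Matrix.smul_apply, smul_eq_mul, cons_val_zero, cons_val_one,
    cons_val_fin_one, mul_zero, add_zero]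
  ring

/-- The representative in `{0,1}² ⊆ ℤ²` of a class modulo 2. -/
def bits (ε : Fin 2 × Fin 2) : Fin 2 → ℤ := ![(ε.1 : ℕ), (ε.2 : ℕ)]

/-- The reindexing `(p, q) ↦ (p + q + ε, p - q)`, which splits the pairs of points of `ℤ²` according
to the class `ε` of their sum modulo 2. -/
def parityEquiv :
    (Fin 2 × Fin 2) × ((Fin 2 → ℤ) × (Fin 2 → ℤ)) ≃ (Fin 2 → ℤ) × (Fin 2 → ℤ) where
  toFun x := (x.2.1 + x.2.2 + bits x.1, x.2.1 - x.2.2)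
  invFun y := ((⟨((y.1 0 + y.2 0) % 2).toNat, by omega⟩, ⟨((y.1 1 + y.2 1) % 2).toNat, by omega⟩),
    (fun i => (y.1 i + y.2 i) / 2, fun i => (y.1 i - y.2 i) / 2))
  left_inv := by
    rintro ⟨⟨e₀, e₁⟩, p, q⟩
    ext i
    · simp only [bits, Pi.add_apply, Pi.sub_apply, cons_val_zero]
      omega
    · simp only [bits, Pi.add_apply, Pi.sub_apply, cons_val_one, cons_val_fin_one]
      omega
    · fin_cases i <;> simp [bits] <;> omega
    · fin_cases i <;> simp [bits] <;> omega
  right_inv := by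
    rintro ⟨m, n⟩
    ext i <;> fin_cases i <;> simp [bits] <;> omega

theorem theta_sq {τ : Mat2} (hτ : τ ∈ SiegelH2) (a b : Fin 2 → ℤ) :
    theta (a, b) τ ^ 2 = ∑ ε, (((a + bits ε) ⬝ᵥ b).negOnePow : ℤ) *
      (Θf (a + bits ε) τ * Θf (bits ε) τ) := by
  have hsum := summable_norm_thetaTerm hτ (a, b)
  have hsum₂ := summable_norm_thetaTerm (by simpa using smul_mem_SiegelH2 hτ two_pos :
    (2 : ℂ) • τ ∈ SiegelH2)
  have hprod : Summable fun x => thetaTerm (a, b) τ (parityEquiv x).1 *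
      thetaTerm (a, b) τ (parityEquiv x).2 :=
    parityEquiv.summable_iff.2 (summable_mul_of_summable_norm hsum hsum)
  rw [sq, theta_eq_tsum, tsum_mul_tsum_of_summable_norm hsum hsum, ← parityEquiv.tsum_eq,
    hprod.tsum_prod, tsum_fintype]
  refine Finset.sum_congr rfl fun ε _ => ?_
  rw [Θf, Θf, theta_eq_tsum, theta_eq_tsum, tsum_mul_tsum_of_summable_norm (hsum₂ _) (hsum₂ _),
    ← tsum_mul_left]
  exact tsum_congr fun x => thetaTerm_mul_thetaTerm a b (bits ε) x.1 x.2 τ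

theorem theta_congr {a a' : Fin 2 → ℤ} (h : ∀ i, a i ≡ a' i [ZMOD 2]) (b : Fin 2 → ℤ) (τ : Mat2) :
    theta (a, b) τ = theta (a', b) τ := by
  choose k hk using fun i => (h i).dvd
  have ha' : a' = a + 2 • k := by
    ext i
    simpa [sub_eq_iff_eq_add'] using hk i
  rw [ha', theta_add_two_nsmul]

theorem Θf_congr {a a' : Fin 2 → ℤ} (h : ∀ i, a i ≡ a' i [ZMOD 2]) (τ : Mat2) :
    Θf a τ = Θf a' τ :=
  theta_congr h _ _

theorem Θf_mulVec (U : Matrix (Fin 2) (Fin 2) ℤ) [Invertible U] (a : Fin 2 → ℤ) (τ : Mat2) :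
    Θf (U *ᵥ a) τ = Θf a ((U.map Int.cast)ᵀ * τ * U.map Int.cast) := by
  have hzero : Uᵀ *ᵥ ![0, 0] = ![0, 0] := by simp [← zero_empty]
  rw [Θf, Θf, theta_mulVec, hzero, Matrix.mul_smul, Matrix.smul_mul]

/-- The fourth powers of the ten even theta constants as linear forms in `x = (P₀, …, P₄)`. -/
def evenThetaFour {R : Type*} [CommRing R] (x : Fin 5 → R) : Fin 10 → R :=
  ![x 0 + x 1 + x 2 + x 3, x 0 - x 1 + x 2 - x 3, x 0 + x 1 - x 2 - x 3, x 0 - x 1 - x 2 + x 3,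
    2 * x 1 + 2 * x 4, 2 * x 1 - 2 * x 4, 2 * x 2 + 2 * x 4, 2 * x 2 - 2 * x 4,
    2 * x 3 + 2 * x 4, 2 * x 3 - 2 * x 4]

theorem theta_pow_four {τ : Mat2} (hτ : τ ∈ SiegelH2) (d : Fin 10) :
    theta (δev d) τ ^ 4 = evenThetaFour (fun k => Pv k τ) d := by
  have hfst (x : ℤ) : Θf ![2, x] τ = Θf ![0, x] τ :=
    Θf_congr (by simp [Fin.forall_fin_two, Int.ModEq]) τ
  have hsnd (x : ℤ) : Θf ![x, 2] τ = Θf ![x, 0] τ :=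
    Θf_congr (by simp [Fin.forall_fin_two, Int.ModEq]) τ
  rw [show 4 = 2 * 2 from rfl, pow_mul, show δev d = ((δev d).1, (δev d).2) from rfl, theta_sq hτ]
  fin_cases d <;>
  · simp [δev, bits, evenThetaFour, Fintype.sum_prod_type, Int.negOnePow_add, hfst, hsnd, Pv,
      P0, P1, P2, P3, P4, one_add_one_eq_two]
    ring

/-- The gradient of the Igusa quartic at `x`. -/
def igusaGradient {R : Type*} [CommRing R] (x : Fin 5 → R) : Fin 5 → R :=
  ![2 * (x 4 ^ 2 * x 0 - x 1 * x 2 * x 3),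
    2 * (x 1 * x 2 ^ 2 + x 1 * x 3 ^ 2 - x 4 ^ 2 * x 1 - x 0 * x 2 * x 3),
    2 * (x 2 * x 1 ^ 2 + x 2 * x 3 ^ 2 - x 4 ^ 2 * x 2 - x 0 * x 1 * x 3),
    2 * (x 3 * x 1 ^ 2 + x 3 * x 2 ^ 2 - x 4 ^ 2 * x 3 - x 0 * x 1 * x 2),
    4 * x 4 ^ 3 + 2 * x 4 * (x 0 ^ 2 - x 1 ^ 2 - x 2 ^ 2 - x 3 ^ 2)]

theorem dI4_eq_igusaGradient (i : Fin 5) (τ : Mat2) :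
    dI4 i τ = igusaGradient (fun k => Pv k τ) i := by
  have hC (j : Fin 5) : MvPolynomial.pderiv j (2 : MvPolynomial (Fin 5) ℂ) = 0 :=
    MvPolynomial.pderiv_C (R := ℂ) (a := 2)
  fin_cases i <;>
  · simp [dI4, I4poly, MvPolynomial.pderiv_X, hC, igusaGradient]
    ring

/-- The three pairs `i < j` of members of a triad. -/
def triadPair : Fin 3 → Fin 6 × Fin 6 := ![(0, 1), (0, 2), (1, 2)]

/-- The index of the even characteristic `ν_{k_i} + ν_{k_j} + ν_{k_{m+3}}`, where `(k₁, …, k₆)` is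
the ordering attached to `δ_d` and `(i, j)` is the pair number `p` of its triad. -/
def xi6Index : Fin 10 → Fin 3 → Fin 3 → Fin 10 :=
  ![![![4, 7, 3], ![1, 8, 5], ![9, 2, 6]], ![![6, 4, 2], ![8, 0, 5], ![3, 9, 7]],
    ![![6, 4, 1], ![9, 3, 5], ![0, 8, 7]], ![![4, 7, 0], ![2, 9, 5], ![8, 1, 6]],
    ![![6, 2, 1], ![7, 3, 0], ![5, 8, 9]], ![![2, 9, 3], ![1, 8, 0], ![7, 4, 6]],
    ![![4, 2, 1], ![7, 9, 8], ![5, 0, 3]], ![![6, 9, 8], ![4, 3, 0], ![5, 1, 2]],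
    ![![6, 7, 9], ![1, 0, 5], ![3, 2, 4]], ![![6, 7, 8], ![2, 3, 5], ![0, 1, 4]]]

/-- The signature `⟨ν_{k_i}|ν_{k_j}⟩` of the pair number `p` of the triad of `δ_d`. -/
def xi6Sign : Fin 10 → Fin 3 → ℤ :=
  ![![-1, -1, -1], ![1, -1, 1], ![1, 1, -1], ![-1, 1, 1], ![1, -1, 1],
    ![1, -1, 1], ![1, 1, -1], ![1, -1, 1], ![1, -1, 1], ![1, 1, -1]]

theorem addChar_triadPair (d : Fin 10) (p m : Fin 3) :
    addChar (addChar (νodd (triad d (triadPair p).1)) (νodd (triad d (triadPair p).2)))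
      (νodd (triad d ⟨m.1 + 3, by omega⟩)) = δev (xi6Index d p m) := by
  decide +revert

theorem sig_eq_negOnePow (κ lam : Char) :
    sig κ lam = ((κ.1 ⬝ᵥ lam.2 - κ.2 ⬝ᵥ lam.1).negOnePow : ℤ) := by
  rw [← exp_pi_mul_I_mul_intCast, Int.cast_sub]
  rfl

theorem sig_triadPair (d : Fin 10) (p : Fin 3) :
    sig (νodd (triad d (triadPair p).1)) (νodd (triad d (triadPair p).2)) = xi6Sign d p := by
  rw [sig_eq_negOnePow, Int.cast_inj]
  decide +revert

theorem Xi6_eq_sum_prod (d : Fin 10) (τ : Mat2) :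
    Xi6 d τ = ∑ p, xi6Sign d p * ∏ m, theta (δev (xi6Index d p m)) τ ^ 4 := by
  simp [← addChar_triadPair, ← sig_triadPair, Xi6, Fin.sum_univ_three, triadPair]

/-- The coefficients of `Ξ₆[δ_d]` in terms of the gradient of the Igusa quartic. -/
def xi6Coeff : Matrix (Fin 10) (Fin 5) ℤ :=
  !![6,  2,  2,  2,  0;
     6, -2,  2, -2,  0;
     6,  2, -2, -2,  0;
     6, -2, -2,  2,  0;
     0,  4,  0,  0,  2;
     0,  4,  0,  0, -2;
     0,  0,  4,  0,  2;
     0,  0,  4,  0, -2;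
     0,  0,  0,  4,  2;
     0,  0,  0,  4, -2]

theorem sum_xi6Sign_mul_prod_evenThetaFour {R : Type*} [CommRing R] (x : Fin 5 → R) (d : Fin 10) :
    ∑ p, xi6Sign d p * ∏ m, evenThetaFour x (xi6Index d p m) =
      ∑ i, xi6Coeff d i * igusaGradient x i := by
  fin_cases d <;>
  · simp [xi6Sign, xi6Index, xi6Coeff, evenThetaFour, igusaGradient, Fin.sum_univ_succ,
      Fin.prod_univ_succ]
    ring

theorem Xi6_eq_sum_dI4 {τ : Mat2} (hτ : τ ∈ SiegelH2) (d : Fin 10) :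
    Xi6 d τ = ∑ i, xi6Coeff d i * dI4 i τ := by
  simp only [Xi6_eq_sum_prod, theta_pow_four hτ, sum_xi6Sign_mul_prod_evenThetaFour,
    dI4_eq_igusaGradient]

theorem span_range_eq_of_mul_eq_one {R M ι κ : Type*} [Semiring R] [AddCommMonoid M] [Module R M]
    [Fintype ι] [Fintype κ] [DecidableEq κ] {v : ι → M} {w : κ → M} {A : Matrix ι κ R}
    {B : Matrix κ ι R} (hBA : B * A = 1) (hv : ∀ i, v i = ∑ j, A i j • w j) :
    Submodule.span R (Set.range v) = Submodule.span R (Set.range w) := by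
  have hw (k : κ) : w k = ∑ i, B k i • v i := by
    calc w k = ∑ j, (B * A) k j • w j := by simp [hBA, one_apply]
      _ = ∑ i, B k i • v i := by
        simp only [mul_apply, Finset.sum_smul, mul_smul, hv, Finset.smul_sum]
        exact Finset.sum_comm
  refine le_antisymm (Submodule.span_le.2 ?_) (Submodule.span_le.2 ?_)
  · rintro _ ⟨i, rfl⟩
    rw [hv]
    exact Submodule.sum_smul_mem _ _ fun j _ => Submodule.subset_span ⟨j, rfl⟩
  · rintro _ ⟨k, rfl⟩
    rw [hw]
    exact Submodule.sum_smul_mem _ _ fun i _ => Submodule.subset_span ⟨i, rfl⟩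

/-- A left inverse of `xi6Coeff`. -/
noncomputable def xi6CoeffLeftInv : Matrix (Fin 5) (Fin 10) ℂ :=
  !![1/24,  1/24,  1/24,  1/24, 0,   0,    0,   0,    0,   0;
     1/8,  -1/8,   1/8,  -1/8,  0,   0,    0,   0,    0,   0;
     1/8,   1/8,  -1/8,  -1/8,  0,   0,    0,   0,    0,   0;
     1/8,  -1/8,  -1/8,   1/8,  0,   0,    0,   0,    0,   0;
     0,     0,     0,     0,    1/4, -1/4, 0,   0,    0,   0]

theorem xi6CoeffLeftInv_mul : xi6CoeffLeftInv * xi6Coeff.map (Int.cast : ℤ → ℂ) = 1 := by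
  ext i j
  fin_cases i <;> fin_cases j <;>
    norm_num [xi6CoeffLeftInv, xi6Coeff, mul_apply, Fin.sum_univ_succ]

theorem span_Xi6_eq_span_dI4 :
    Submodule.span ℂ (Set.range fun (d : Fin 10) (τ : SiegelH2) => Xi6 d τ) =
      Submodule.span ℂ (Set.range fun (i : Fin 5) (τ : SiegelH2) => dI4 i τ) := by
  refine span_range_eq_of_mul_eq_one xi6CoeffLeftInv_mul fun d => ?_
  ext τ
  simp [Xi6_eq_sum_dI4 τ.2]

theorem exp_two_pi_mul_I_mul_intCast_add (k l : ℤ) :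
    Complex.exp (Real.pi * Complex.I * (2 * k + l / 2)) = Complex.I ^ l := by
  have h := Complex.exp_periodic.int_mul k (l * (Real.pi / 2 * Complex.I))
  rw [Complex.exp_int_mul _ l, Complex.exp_pi_div_two_mul_I] at h
  rw [← h]
  ring_nf

theorem Θf_add_map_intCast {S : Matrix (Fin 2) (Fin 2) ℤ} (hS : S.IsSymm) (ε : Fin 2 → ℤ)
    (τ : Mat2) :
    Θf ε (τ + S.map Int.cast) = Complex.I ^ (ε ⬝ᵥ S *ᵥ ε) * Θf ε τ := by
  rw [Θf, Θf, theta_eq_tsum, theta_eq_tsum, ← tsum_mul_left]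
  refine tsum_congr fun n => ?_
  rw [← exp_two_pi_mul_I_mul_intCast_add (n ⬝ᵥ S *ᵥ (n + ε)), thetaTerm, thetaTerm,
    ← Complex.exp_add]
  have hS' : S 1 0 = S 0 1 := hS.apply 0 1
  congr 1
  simp only [Matrix.smul_apply, Matrix.add_apply, map_apply, smul_eq_mul, Fin.sum_univ_two, hS',
    cons_val_zero, cons_val_one, cons_val_fin_one, Int.cast_zero, Int.cast_add, Int.cast_mul,
    mul_zero, add_zero, dotProduct, mulVec, Pi.add_apply]
  ring

/-- The characters by which translation by an integral symmetric matrix `S` acts on `P₀, …, P₄`. -/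
noncomputable def translateSign (S : Matrix (Fin 2) (Fin 2) ℤ) : Fin 5 → ℂ :=
  ![1, (-1) ^ S 1 1, (-1) ^ S 0 0, (-1) ^ (S 0 0 + S 1 1), (-1) ^ (S 0 0 + S 0 1 + S 1 1)]

theorem Pv_add_map_intCast {S : Matrix (Fin 2) (Fin 2) ℤ} (hS : S.IsSymm) (i : Fin 5)
    (τ : Mat2) :
    Pv i (τ + S.map Int.cast) = translateSign S i * Pv i τ := by
  have hS' : S 1 0 = S 0 1 := hS.apply 0 1
  have hneg (k : ℤ) : (-1 : ℂ) ^ k = (Complex.I ^ k) ^ 2 := by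
    rw [← Complex.I_sq, ← zpow_natCast, ← zpow_natCast, zpow_comm]
  have hI (k : ℤ) : (Complex.I ^ k) ^ 4 = 1 := by
    rw [← zpow_natCast, zpow_comm, zpow_natCast, Complex.I_pow_four, _root_.one_zpow]
  have hx := hI (S 0 0)
  have hy := hI (S 0 1)
  have hz := hI (S 1 1)
  fin_cases i <;>
    simp [Pv, P0, P1, P2, P3, P4, Θf_add_map_intCast hS, translateSign, dotProduct, mulVec,
      Fin.sum_univ_two, hS', hneg, zpow_add₀, mul_pow] <;> grind

theorem igusaGradient_mul {R : Type*} [CommRing R] {s : Fin 5 → R} (hsq : ∀ i, s i ^ 2 = 1)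
    (hs : s 1 * s 2 * s 3 = s 0) (x : Fin 5 → R) (i : Fin 5) :
    igusaGradient (s * x) i = s i * igusaGradient x i := by
  have h0 := hsq 0
  have h1 := hsq 1
  have h2 := hsq 2
  have h3 := hsq 3
  have h4 := hsq 4
  fin_cases i <;> simp [igusaGradient] <;> grind

theorem translateSign_sq (S : Matrix (Fin 2) (Fin 2) ℤ) (i : Fin 5) :
    translateSign S i ^ 2 = 1 := by
  have hsq (k : ℤ) : ((-1 : ℂ) ^ k) ^ 2 = 1 := by
    rw [← zpow_natCast, zpow_comm, zpow_natCast, neg_one_sq, _root_.one_zpow]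
  fin_cases i <;> simp [translateSign, hsq]

theorem translateSign_mul_mul (S : Matrix (Fin 2) (Fin 2) ℤ) :
    translateSign S 1 * translateSign S 2 * translateSign S 3 = translateSign S 0 := by
  have h₃ : translateSign S 3 = translateSign S 2 * translateSign S 1 :=
    zpow_add₀ (neg_ne_zero.2 one_ne_zero) _ _
  have h₀ : translateSign S 0 = 1 := rfl
  linear_combination translateSign S 1 * translateSign S 2 * h₃ - h₀ +
    translateSign S 2 ^ 2 * translateSign_sq S 1 + translateSign_sq S 2

theorem dI4_add_map_intCast {S : Matrix (Fin 2) (Fin 2) ℤ} (hS : S.IsSymm) (i : Fin 5)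
    (τ : Mat2) :
    dI4 i (τ + S.map Int.cast) = translateSign S i * dI4 i τ := by
  have hPv : (fun k => Pv k (τ + S.map Int.cast)) = translateSign S * fun k => Pv k τ :=
    funext fun k => Pv_add_map_intCast hS k τ
  rw [dI4_eq_igusaGradient, dI4_eq_igusaGradient, hPv,
    igusaGradient_mul (translateSign_sq S) (translateSign_mul_mul S)]

/-- The operator `f ↦ f (· + S)` on functions on the Siegel upper half space. -/
noncomputable def translateOp {S : Matrix (Fin 2) (Fin 2) ℤ} (hS : S.IsSymm) :
    Module.End ℂ (SiegelH2 → ℂ) :=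
  LinearMap.funLeft ℂ ℂ fun τ => ⟨τ.1 + S.map Int.cast, add_mem_SiegelH2 τ.2
    (by rw [Matrix.IsSymm, ← transpose_map, hS]) (by ext; simp)⟩

theorem translateOp_dI4 {S : Matrix (Fin 2) (Fin 2) ℤ} (hS : S.IsSymm) (i : Fin 5) :
    translateOp hS (fun τ => dI4 i τ) = translateSign S i • fun τ : SiegelH2 => dI4 i τ :=
  funext fun τ => dI4_add_map_intCast hS i τ

/-- A combination of three translations whose eigenvalues on the five derivatives `dI4 i` are
distinct. -/
noncomputable def separatingOp : Module.End ℂ (SiegelH2 → ℂ) :=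
  translateOp (S := !![0, 0; 0, 1]) (by decide) +
    2 • translateOp (S := !![1, 0; 0, 0]) (by decide) +
    4 • translateOp (S := !![0, 1; 1, 0]) (by decide)

/-- The eigenvalues of `separatingOp` on the five derivatives `dI4 i`. -/
def separatingEigenvalue : Fin 5 → ℂ := ![7, 5, 3, 1, -7]

theorem separatingOp_dI4 (i : Fin 5) :
    separatingOp (fun τ => dI4 i τ) = separatingEigenvalue i • fun τ : SiegelH2 => dI4 i τ := by
  simp only [separatingOp, LinearMap.add_apply, LinearMap.smul_apply, translateOp_dI4]
  rw [← smul_assoc, ← smul_assoc, ← add_smul, ← add_smul]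
  congr 1
  fin_cases i <;> simp [translateSign, separatingEigenvalue] <;> norm_num

theorem separatingEigenvalue_injective : Function.Injective separatingEigenvalue := by
  intro i j hij
  fin_cases i <;> fin_cases j <;> first | rfl | norm_num [separatingEigenvalue] at hij

/-- The value at the point `iY` of the theta constant of characteristic `[a;0]`. -/
noncomputable def gaussSum (Y : Matrix (Fin 2) (Fin 2) ℝ) (a : Fin 2 → ℤ) : ℝ :=
  ∑' n, gaussTerm Y a n

theorem theta_I_smul (Y : Matrix (Fin 2) (Fin 2) ℝ) (a : Fin 2 → ℤ) :
    theta (a, ![0, 0]) (Complex.I • Y.map Complex.ofReal) = gaussSum Y a := by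
  rw [theta_eq_tsum, gaussSum, Complex.ofReal_tsum]
  refine tsum_congr fun n => ?_
  rw [thetaTerm, gaussTerm, Complex.ofReal_exp]
  congr 1
  simp only [Matrix.smul_apply, map_apply, smul_eq_mul, Fin.sum_univ_two, cons_val_zero,
    cons_val_one, cons_val_fin_one, Int.cast_zero, mul_zero, add_zero, dotProduct, mulVec,
    halfShift, neg_mul, Complex.ofReal_neg, Complex.ofReal_mul, Complex.ofReal_add,
    Complex.ofReal_intCast, Complex.ofReal_div, Complex.ofReal_ofNat]
  linear_combination (Real.pi *
    (((n 0 : ℂ) + a 0 / 2) * (Y 0 0 * (n 0 + a 0 / 2) + Y 0 1 * (n 1 + a 1 / 2)) +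
      ((n 1 : ℂ) + a 1 / 2) * (Y 1 0 * (n 0 + a 0 / 2) + Y 1 1 * (n 1 + a 1 / 2)))) *
    Complex.I_sq

theorem Θf_I_smul (Y : Matrix (Fin 2) (Fin 2) ℝ) (ε : Fin 2 → ℤ) :
    Θf ε (Complex.I • Y.map Complex.ofReal) = gaussSum ((2 : ℝ) • Y) ε := by
  rw [← theta_I_smul, Θf, smul_comm]
  congr 2
  ext
  simp

theorem gaussSum_pos {Y : Matrix (Fin 2) (Fin 2) ℝ} (hY : Y.PosDef) (a : Fin 2 → ℤ) :
    0 < gaussSum Y a :=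
  (summable_gaussTerm hY a).tsum_pos (fun n => (gaussTerm_pos Y a n).le) 0 (gaussTerm_pos Y a 0)

theorem one_le_gaussSum_zero {Y : Matrix (Fin 2) (Fin 2) ℝ} (hY : Y.PosDef) :
    1 ≤ gaussSum Y ![0, 0] := by
  rw [← zero_empty, cons_zero_zero, cons_zero_zero]
  have hterm : gaussTerm Y 0 0 = 1 := by simp [gaussTerm, halfShift, dotProduct]
  exact hterm ▸ (summable_gaussTerm hY 0).le_tsum 0 fun n _ => (gaussTerm_pos Y 0 n).le

theorem halfShift_ne_zero {a : Fin 2 → ℤ} (ha : ∃ i, Odd (a i)) (n : Fin 2 → ℤ) :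
    halfShift a n ≠ 0 := by
  obtain ⟨i, k, hk⟩ := ha
  intro h
  have hi : ((2 * (n i + k) + 1 : ℤ) : ℝ) = 0 := by
    have := congrFun h i
    simp only [halfShift, hk, Pi.zero_apply] at this
    push_cast at this ⊢
    linarith
  have := Int.cast_eq_zero.1 hi
  omega

theorem tendsto_gaussSum_smul_atTop {Y : Matrix (Fin 2) (Fin 2) ℝ} (hY : Y.PosDef)
    {a : Fin 2 → ℤ} (ha : ∃ i, Odd (a i)) :
    Tendsto (fun y : ℝ => gaussSum (y • Y) a) atTop (𝓝 0) := by
  have hpos (n : Fin 2 → ℤ) : 0 < halfShift a n ⬝ᵥ Y *ᵥ halfShift a n := by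
    simpa using hY.dotProduct_mulVec_pos (halfShift_ne_zero ha n)
  have hterm (y : ℝ) (n : Fin 2 → ℤ) : gaussTerm (y • Y) a n =
      Real.exp (-(y * (Real.pi * (halfShift a n ⬝ᵥ Y *ᵥ halfShift a n)))) := by
    rw [gaussTerm, smul_mulVec, dotProduct_smul, smul_eq_mul]
    ring_nf
  rw [← tsum_zero (β := Fin 2 → ℤ)]
  refine tendsto_tsum_of_dominated_convergence (summable_gaussTerm hY a) (fun n => ?_) ?_
  · simp only [hterm]
    exact Real.tendsto_exp_neg_atTop_nhds_zero.comp
      (tendsto_id.atTop_mul_const (mul_pos Real.pi_pos (hpos n)))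
  · filter_upwards [eventually_ge_atTop 1] with y hy n
    rw [Real.norm_of_nonneg (gaussTerm_pos _ _ _).le, hterm, gaussTerm, neg_mul]
    exact Real.exp_le_exp.2 <| neg_le_neg <| le_mul_of_one_le_left
      (mul_pos Real.pi_pos (hpos n)).le hy

/-- The Gram matrix of the hexagonal lattice, whose symmetry of order three permutes the three
nonzero classes modulo 2. -/
def hexagonalGram : Matrix (Fin 2) (Fin 2) ℝ := !![2, -1; -1, 2]

theorem posDef_hexagonalGram : hexagonalGram.PosDef := by
  refine .of_dotProduct_mulVec_pos (by ext i j; fin_cases i <;> fin_cases j <;> rfl) fun v hv => ?_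
  have hsum : star v ⬝ᵥ hexagonalGram *ᵥ v = v 0 ^ 2 + (v 0 - v 1) ^ 2 + v 1 ^ 2 := by
    simp only [hexagonalGram, dotProduct, mulVec, Fin.sum_univ_two, Pi.star_apply, star_trivial,
      of_apply, cons_val', cons_val_fin_one, cons_val_zero, cons_val_one, neg_mul, one_mul]
    ring
  rw [hsum]
  by_cases h : v 0 = 0
  · have : v 1 ≠ 0 := fun h' => hv (by ext i; fin_cases i <;> assumption)
    positivity
  · positivity

/-- The symmetry of order three of the hexagonal lattice. -/
def hexagonalRotation : Matrix (Fin 2) (Fin 2) ℤ := !![0, -1; 1, -1]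

instance : Invertible hexagonalRotation where
  invOf := !![-1, 1; -1, 0]
  invOf_mul_self := by decide
  mul_invOf_self := by decide

/-- The point `iyA` of the Siegel upper half space, where `A` is the hexagonal Gram matrix. -/
noncomputable def hexagonalPoint (y : ℝ) : Mat2 :=
  Complex.I • (y • hexagonalGram).map Complex.ofReal

theorem Θf_hexagonalRotation_mulVec (y : ℝ) (a : Fin 2 → ℤ) :
    Θf (hexagonalRotation *ᵥ a) (hexagonalPoint y) = Θf a (hexagonalPoint y) := by
  have hfix : (hexagonalRotation.map (Int.cast : ℤ → ℂ))ᵀ * hexagonalPoint y *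
      hexagonalRotation.map Int.cast = hexagonalPoint y := by
    ext i j
    fin_cases i <;> fin_cases j <;>
      simp [hexagonalPoint, hexagonalRotation, hexagonalGram, mul_apply, Fin.sum_univ_two] <;> ring
  rw [Θf_mulVec, hfix]

theorem Θf_hexagonalPoint_eq (y : ℝ) :
    Θf ![0, 1] (hexagonalPoint y) = Θf ![1, 0] (hexagonalPoint y) ∧
      Θf ![1, 1] (hexagonalPoint y) = Θf ![1, 0] (hexagonalPoint y) := by
  have h₁ : Θf ![1, 1] (hexagonalPoint y) = Θf ![1, 0] (hexagonalPoint y) := by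
    rw [← Θf_hexagonalRotation_mulVec]
    exact Θf_congr (by decide) _
  have h₂ : Θf ![0, 1] (hexagonalPoint y) = Θf ![1, 1] (hexagonalPoint y) := by
    rw [← Θf_hexagonalRotation_mulVec]
    exact Θf_congr (by decide) _
  exact ⟨h₂.trans h₁, h₁⟩

/-- The value of `(P₀, …, P₄)` where `Θ[00] = s` and the other three `Θ[ε]` are equal to `t`. -/
def hexagonalVec {R : Type*} [CommRing R] (s t : R) : Fin 5 → R :=
  ![s ^ 4 + 3 * t ^ 4, 2 * (s ^ 2 * t ^ 2 + t ^ 4), 2 * (s ^ 2 * t ^ 2 + t ^ 4),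
    2 * (s ^ 2 * t ^ 2 + t ^ 4), 4 * (s * t ^ 3)]

theorem igusaGradient_hexagonalVec {R : Type*} [CommRing R] (s t : R) (i : Fin 5) :
    igusaGradient (hexagonalVec s t) i = (s ^ 2 - t ^ 2) ^ 3 *
      ![16 * t ^ 6, -8 * t ^ 4 * (s ^ 2 + t ^ 2), -8 * t ^ 4 * (s ^ 2 + t ^ 2),
        -8 * t ^ 4 * (s ^ 2 + t ^ 2), 8 * s * t ^ 3 * (s ^ 2 + 3 * t ^ 2)] i := by
  fin_cases i <;> simp [igusaGradient, hexagonalVec] <;> ring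

theorem igusaGradient_hexagonalVec_ne_zero {s t : ℝ} (ht : 0 < t) (hts : t < s) (i : Fin 5) :
    igusaGradient (hexagonalVec (s : ℂ) t) i ≠ 0 := by
  have hs : 0 < s := ht.trans hts
  have hs₀ : (s : ℂ) ≠ 0 := mod_cast hs.ne'
  have ht₀ : (t : ℂ) ≠ 0 := mod_cast ht.ne'
  have hsub : (s : ℂ) ^ 2 - t ^ 2 ≠ 0 :=
    mod_cast (sub_pos.2 (pow_lt_pow_left₀ hts ht.le two_ne_zero)).ne'
  have hadd : (s : ℂ) ^ 2 + t ^ 2 ≠ 0 := mod_cast (by positivity : s ^ 2 + t ^ 2 ≠ 0)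
  have hadd₃ : (s : ℂ) ^ 2 + 3 * t ^ 2 ≠ 0 := mod_cast (by positivity : s ^ 2 + 3 * t ^ 2 ≠ 0)
  rw [igusaGradient_hexagonalVec]
  fin_cases i <;> simp [hs₀, ht₀, hsub, hadd, hadd₃]

theorem Pv_hexagonalPoint (y : ℝ) (k : Fin 5) :
    Pv k (hexagonalPoint y) =
      hexagonalVec (Θf ![0, 0] (hexagonalPoint y)) (Θf ![1, 0] (hexagonalPoint y)) k := by
  obtain ⟨h₀₁, h₁₁⟩ := Θf_hexagonalPoint_eq y
  fin_cases k <;> simp [Pv, P0, P1, P2, P3, P4, hexagonalVec, h₀₁, h₁₁] <;> ring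

theorem Θf_hexagonalPoint (y : ℝ) (a : Fin 2 → ℤ) :
    Θf a (hexagonalPoint y) = gaussSum ((2 * y) • hexagonalGram) a := by
  rw [hexagonalPoint, Θf_I_smul, smul_smul]

theorem exists_dI4_ne_zero : ∃ τ ∈ SiegelH2, ∀ i, dI4 i τ ≠ 0 := by
  have hlim : Tendsto (fun y : ℝ => gaussSum ((2 * y) • hexagonalGram) ![1, 0]) atTop (𝓝 0) :=
    (tendsto_gaussSum_smul_atTop posDef_hexagonalGram ⟨0, odd_one⟩).comp
      (tendsto_id.const_mul_atTop two_pos)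
  obtain ⟨y, hy, hlt⟩ := ((eventually_gt_atTop 0).and (hlim.eventually_lt_const one_pos)).exists
  have hpd := posDef_hexagonalGram.smul (mul_pos two_pos hy)
  have hts := hlt.trans_le (one_le_gaussSum_zero hpd)
  refine ⟨hexagonalPoint y, I_smul_mem_SiegelH2 (posDef_hexagonalGram.smul hy), fun i => ?_⟩
  rw [dI4_eq_igusaGradient, funext (Pv_hexagonalPoint y), Θf_hexagonalPoint, Θf_hexagonalPoint]
  exact igusaGradient_hexagonalVec_ne_zero (gaussSum_pos hpd _) hts i

theorem linearIndependent_dI4 :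
    LinearIndependent ℂ fun (i : Fin 5) (τ : SiegelH2) => dI4 i τ := by
  obtain ⟨τ, hτ, hne⟩ := exists_dI4_ne_zero
  refine Module.End.eigenvectors_linearIndependent' separatingOp separatingEigenvalue
    separatingEigenvalue_injective _ fun i => ?_
  exact Module.End.hasEigenvector_iff.2 ⟨Module.End.mem_eigenspace_iff.2 (separatingOp_dI4 i),
    fun h => hne i (congrFun h ⟨τ, hτ⟩)⟩

/-- `V_Ξ` equals the span of the five derivatives of the Igusa quartic,
and this common span has dimension exactly 5. -/
theorem statement6 :
    Submodule.span ℂ (Set.range fun d : Fin 10 => fun τ : SiegelH2 => Xi6 d τ.1)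
      = Submodule.span ℂ (Set.range fun i : Fin 5 => fun τ : SiegelH2 => dI4 i τ.1) ∧
    Module.finrank ℂ ↥(Submodule.span ℂ
      (Set.range fun d : Fin 10 => fun τ : SiegelH2 => Xi6 d τ.1)) = 5 := by
  refine ⟨span_Xi6_eq_span_dI4, ?_⟩
  rw [span_Xi6_eq_span_dI4, finrank_span_eq_card linearIndependent_dI4, Fintype.card_fin]

end TwoLoop
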